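/- Let λ be a partition of n. The antichain fi(λ) in the partition lattice Π_n is itself a blocker (i.e. fi(λ) = C* for some antichain C in Π_n, equivalently fi(λ)** = fi(λ)) if and only if λ is a hook shape (p, 1^{n-p}) for some p. -/

import Mathlib

open Finset

/-- The blocker of a set `A` in a poset with bottom element: the minimal elements among
those having a common atom with every member of `A`. -/
def blocker {P : Type*} [PartialOrder P] [OrderBot P] (A : Set P) : Set P :=
  {x | (∀ a ∈ A, ∃ l : P, IsAtom l ∧ l ≤ x ∧ l ≤ a) ∧
    ∀ y : P, (∀ a ∈ A, ∃ l : P, IsAtom l ∧ l ≤ y ∧ l ≤ a) → y ≤ x → y = x}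

/-- An antichain in a poset with bottom element, in the sense of Björner–Hultman:
a nonempty set avoiding `⊥` whose elements are pairwise incomparable. -/
def IsAnti {P : Type*} [PartialOrder P] [OrderBot P] (A : Set P) : Prop :=
  A.Nonempty ∧ ⊥ ∉ A ∧ IsAntichain (· ≤ ·) A

/-- The partition lattice `Π_n`: set partitions of `{1,…,n}`, ordered by refinement. -/
abbrev SetPart (n : ℕ) := Finpartition (univ : Finset (Fin n))

/-- The shape of a set partition: the number partition formed by its block sizes. -/
def shape {n : ℕ} (σ : SetPart n) : Nat.Partition n where
  parts := σ.parts.val.map Finset.card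
  parts_pos := by
    intro i hi
    simp only [Multiset.mem_map, Finset.mem_val] at hi
    obtain ⟨p, hp, rfl⟩ := hi
    exact Finset.card_pos.mpr (σ.nonempty_of_mem_parts hp)
  parts_sum := by
    have h := σ.sum_card_parts
    rw [Finset.sum] at h
    rw [h, card_univ, Fintype.card_fin]

/-- The fiber under the shape map of a set `S` of number partitions: all set
partitions whose shape lies in `S`. -/
def fi {n : ℕ} (S : Set (Nat.Partition n)) : Set (SetPart n) :=
  {σ | shape σ ∈ S}

/-- The hook-shaped number partition `(p, 1^{n-p})`: one part equal to `p` and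
`n - p` parts equal to `1`. -/
def hook (n p : ℕ) (hp : 0 < p) (hpn : p ≤ n) : Nat.Partition n where
  parts := p ::ₘ Multiset.replicate (n - p) 1
  parts_pos := by
    intro i hi
    simp only [Multiset.mem_cons, Multiset.mem_replicate] at hi
    rcases hi with rfl | ⟨-, rfl⟩
    · exact hp
    · exact one_pos
  parts_sum := by
    simp only [Multiset.sum_cons, Multiset.sum_replicate, smul_eq_mul, mul_one]
    omega

/-!
Two elements of an atomic lattice have a common atom iff they are not disjoint, and two set
partitions `x`, `c` are disjoint iff the blocks of `c` separate the points of every block of `x`.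

If `λ = (p, 1^{n-p})`, take the partitions with at most `p - 1` blocks. By the pigeonhole principle
a partition with a block of size at least `p` is disjoint from none of them. Conversely, if all
blocks of `x` are smaller, number the points of each block by `0, …, p - 2`; the classes of equal
numbers form a partition with at most `p - 1` blocks that is disjoint from `x`. So the minimal
blocking partitions are those of shape `λ`.

Now let `fi(λ) = C*`, and suppose that a partition `x` of shape `λ` has two blocks with
`#A ≥ #B ≥ 2`. Moving a point of `B` to `A` gives a partition `y` with as many blocks as `x` but of
another shape, hence not above any element of `fi(λ)`, and so disjoint from some `c ∈ C`. As `c`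
separates the `#A + 1` points of the enlarged block, one of these points lies in a block of `c`
that avoids the `#B - 1` points left in `B`. Moving this point to `B` gives a partition of shape `λ`
that is still disjoint from `c`, a contradiction.
-/

section Blocker

variable {P : Type*} [PartialOrder P] [OrderBot P] {A S F : Set P} {x y : P}

/-- `x` is blocking for `A` if it meets every member of `A` above `⊥`. In an atomic poset this is
the condition that `blocker` states through common atoms. -/
def IsBlocking (A : Set P) (x : P) : Prop :=
  ∀ a ∈ A, ¬ Disjoint x a

lemma IsBlocking.mono (hx : IsBlocking A x) (hxy : x ≤ y) : IsBlocking A y :=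
  fun a ha hya => hx a ha (hya.mono_left hxy)

lemma IsBlocking.ne_bot (hx : IsBlocking A x) (hA : A.Nonempty) : x ≠ ⊥ := by
  rintro rfl
  obtain ⟨a, ha⟩ := hA
  exact hx a ha disjoint_bot_left

lemma exists_isAtom_le_le_iff_not_disjoint [IsAtomic P] :
    (∃ l, IsAtom l ∧ l ≤ x ∧ l ≤ y) ↔ ¬ Disjoint x y := by
  constructor
  · rintro ⟨l, hl, hlx, hly⟩ hxy
    exact hl.1 (le_bot_iff.1 (hxy hlx hly))
  · intro hxy
    obtain ⟨z, hzx, hzy, hz⟩ : ∃ z, z ≤ x ∧ z ≤ y ∧ ¬ z ≤ ⊥ := by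
      simpa only [Disjoint, not_forall, exists_prop] using hxy
    obtain ⟨l, hl, hlz⟩ := (IsAtomic.eq_bot_or_exists_atom_le z).resolve_left (hz ·.le)
    exact ⟨l, hl, hlz.trans hzx, hlz.trans hzy⟩

lemma mem_blocker_iff_minimal [IsAtomic P] : x ∈ blocker A ↔ Minimal (IsBlocking A) x := by
  simp only [blocker, Set.mem_ofPred_eq, exists_isAtom_le_le_iff_not_disjoint]
  exact and_congr_right fun _ => forall₂_congr fun y _ =>
    ⟨fun h hyx => (h hyx).ge, fun h hyx => hyx.antisymm (h hyx)⟩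

lemma mem_upperClosure_blocker_iff [Finite P] :
    x ∈ upperClosure (blocker A) ↔ IsBlocking A x := by
  simp only [mem_upperClosure, mem_blocker_iff_minimal]
  constructor
  · rintro ⟨y, hy, hyx⟩
    exact hy.prop.mono hyx
  · intro hx
    obtain ⟨y, hyx, hy⟩ := exists_minimal_le_of_wellFoundedLT _ x hx
    exact ⟨y, hy, hyx⟩

lemma blocker_nonempty [OrderTop P] [Finite P] (hA : ⊥ ∉ A) : (blocker A).Nonempty := by
  have htop : IsBlocking A ⊤ := fun a ha h => hA (le_bot_iff.1 (h le_top le_rfl) ▸ ha)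
  obtain ⟨x, hx, -⟩ := mem_upperClosure.1 (mem_upperClosure_blocker_iff.2 htop)
  exact ⟨x, hx⟩

lemma isAnti_setOf_minimal [Finite P] (hS : S.Nonempty) (hbot : ⊥ ∉ S) :
    IsAnti {c | Minimal (· ∈ S) c} := by
  obtain ⟨a, ha⟩ := hS
  obtain ⟨c, -, hc⟩ := exists_minimal_le_of_wellFoundedLT (· ∈ S) a ha
  exact ⟨⟨c, hc⟩, fun h => hbot h.prop, setOfPred_minimal_antichain _⟩

lemma isBlocking_setOf_minimal_iff [Finite P] :
    IsBlocking {c | Minimal (· ∈ S) c} x ↔ IsBlocking S x := by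
  refine ⟨fun hx a ha hxa => ?_, fun hx c hc => hx c hc.prop⟩
  obtain ⟨c, hca, hc⟩ := exists_minimal_le_of_wellFoundedLT (· ∈ S) a ha
  exact hx c hc (hxa.mono_right hca)

lemma exists_isAnti_blocker_eq [Finite P] (hS : S.Nonempty) (hbot : ⊥ ∉ S)
    (hF : IsAntichain (· ≤ ·) F) (h : ∀ x, IsBlocking S x ↔ x ∈ upperClosure F) :
    ∃ C, IsAnti C ∧ blocker C = F := by
  refine ⟨_, isAnti_setOf_minimal hS hbot, Set.ext fun x => ?_⟩
  have hblock : IsBlocking {c | Minimal (· ∈ S) c} = (· ∈ upperClosure F) :=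
    funext fun y => propext (isBlocking_setOf_minimal_iff.trans (h y))
  rw [mem_blocker_iff_minimal, hblock, hF.minimal_mem_upperClosure_iff_mem]

end Blocker

lemma exists_mem_injOn_insert {α β : Type*} [DecidableEq α] {f : α → β} {U V : Finset α}
    (hU : Set.InjOn f U) (hV : Set.InjOn f V) (hVU : #V < #U) :
    ∃ e ∈ U, Set.InjOn f (insert e V : Finset α) := by
  classical
  have hcard : #(V.image f) < #(U.image f) := by
    rw [card_image_of_injOn hU]
    exact card_image_le.trans_lt hVU
  obtain ⟨_, hc, heV⟩ := exists_mem_notMem_of_card_lt_card hcard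
  obtain ⟨e, he, rfl⟩ := mem_image.1 hc
  have he' : e ∉ V := fun h => heV (mem_image_of_mem f h)
  refine ⟨e, he, ?_⟩
  rw [coe_insert, Set.injOn_insert (mem_coe.not.2 he')]
  exact ⟨hV, by simpa using heV⟩

section Finpartition

variable {α : Type*} [DecidableEq α] {s : Finset α} {x y c : Finpartition s} {A B S U : Finset α}

lemma eq_bot_iff_card_parts_le_one : x = ⊥ ↔ ∀ B ∈ x.parts, #B ≤ 1 := by
  constructor
  · rintro rfl B hB
    obtain ⟨a, -, rfl⟩ := Finpartition.mem_bot_iff.1 hB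
    exact (card_singleton a).le
  · refine fun h => le_bot_iff.1 fun B hB => ?_
    obtain ⟨a, ha⟩ := x.nonempty_of_mem_parts hB
    exact ⟨{a}, Finpartition.mem_bot_iff.2 ⟨a, x.subset hB ha, rfl⟩,
      fun b hb => mem_singleton.2 (card_le_one.1 (h B hB) b hb a ha)⟩

lemma disjoint_iff_injOn_part : Disjoint x c ↔ ∀ B ∈ x.parts, Set.InjOn c.part B := by
  rw [disjoint_iff, eq_bot_iff_card_parts_le_one]
  constructor
  · intro h B hB a ha b hb hab
    have hac : a ∈ c.part a := c.mem_part (x.subset hB ha)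
    have hbc : b ∈ c.part a := hab ▸ c.mem_part (x.subset hB hb)
    have hmem : B ∩ c.part a ∈ (x ⊓ c).parts := by
      rw [Finpartition.parts_inf, mem_erase, mem_image]
      exact ⟨ne_empty_of_mem (mem_inter.2 ⟨ha, hac⟩), (B, c.part a),
        mem_product.2 ⟨hB, c.part_mem.2 (x.subset hB ha)⟩, rfl⟩
    exact card_le_one.1 (h _ hmem) a (mem_inter.2 ⟨ha, hac⟩) b (mem_inter.2 ⟨hb, hbc⟩)
  · intro h E hE
    obtain ⟨B, hB, hEB⟩ := (inf_le_left : x ⊓ c ≤ x) hE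
    obtain ⟨D, hD, hED⟩ := (inf_le_right : x ⊓ c ≤ c) hE
    refine card_le_one.2 fun a ha b hb => h B hB (hEB ha) (hEB hb) ?_
    rw [c.part_eq_of_mem hD (hED ha), c.part_eq_of_mem hD (hED hb)]

lemma eq_of_le_of_card_parts_le (hxy : x ≤ y) (hcard : #x.parts ≤ #y.parts) : x = y := by
  refine hxy.antisymm ?_
  have hsub (B : y.parts) : ∃ C : x.parts, C.1 ⊆ B.1 := by
    obtain ⟨C, hC, hCB⟩ := Finpartition.exists_le_of_le hxy B.2
    exact ⟨⟨C, hC⟩, hCB⟩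
  choose f hf using hsub
  have hinj : Function.Injective f := by
    intro B D hBD
    obtain ⟨a, ha⟩ := x.nonempty_of_mem_parts (f B).2
    exact Subtype.ext (y.eq_of_mem_parts B.2 D.2 (hf B ha) (hf D (hBD ▸ ha)))
  have hsurj : Function.Surjective f :=
    (hinj.bijective_of_nat_card_le (by simpa using hcard)).surjective
  intro B hB
  refine ⟨f ⟨B, hB⟩, (f ⟨B, hB⟩).2, fun a ha => ?_⟩
  have has : a ∈ s := y.subset hB ha
  obtain ⟨D, hD⟩ := hsurj ⟨x.part a, x.part_mem.2 has⟩
  have haD : a ∈ (f D).1 := hD ▸ x.mem_part has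
  have hDB : D = ⟨B, hB⟩ := Subtype.ext (y.eq_of_mem_parts D.2 hB (hf D haD) ha)
  exact hDB ▸ haD

/-- The multiset of block sizes of a partition of a finset; `shape` is the case of a partition
of `Fin n`. -/
def blockSizes (x : Finpartition s) : Multiset ℕ :=
  x.parts.val.map card

lemma mem_blockSizes {k : ℕ} : k ∈ blockSizes x ↔ ∃ B ∈ x.parts, #B = k := by
  simp only [blockSizes, Multiset.mem_map, mem_val]

lemma card_blockSizes : (blockSizes x).card = #x.parts :=
  Multiset.card_map _ _

lemma blockSizes_eq_cons (hA : A ∈ x.parts) :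
    blockSizes x = #A ::ₘ (x.parts.erase A).val.map card := by
  rw [blockSizes, erase_val, ← Multiset.map_cons, Multiset.cons_erase (by simpa using hA)]

lemma blockSizes_extend {t : Finset α} (hB : B ≠ ⊥) (hsB : Disjoint s B) (ht : s ⊔ B = t) :
    blockSizes (x.extend hB hsB ht) = #B ::ₘ blockSizes x := by
  have hBx : B ∉ x.parts := fun h => hB (hsB.symm.eq_bot_of_le (x.le h))
  rw [blockSizes, Finpartition.extend_parts, insert_val_of_notMem hBx, Multiset.map_cons,
    blockSizes]

/-- The partition obtained from `x` by merging its blocks `A` and `B` and then cutting their union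
into `S` and its complement. -/
def recut (x : Finpartition s) (hA : A ∈ x.parts) (hB : B ∈ x.parts) (hS : S.Nonempty)
    (hSAB : S ⊂ A ∪ B) : Finpartition s :=
  ((x.avoid (A ∪ B)).extend (c := s \ ((A ∪ B) \ S)) hS.ne_empty
    (disjoint_sdiff_self_left.mono_right hSAB.subset)
    (by
      have hs : A ∪ B ⊆ s := union_subset (x.subset hA) (x.subset hB)
      rw [sdiff_sdiff_right', inf_eq_inter, inter_eq_right.2 (hSAB.subset.trans hs)])).extend
    (sdiff_nonempty.2 hSAB.not_subset).ne_empty disjoint_sdiff_self_left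
    (sdiff_union_of_subset
      (sdiff_subset.trans (union_subset (x.subset hA) (x.subset hB))))

lemma parts_avoid_union (hA : A ∈ x.parts) (hB : B ∈ x.parts) :
    (x.avoid (A ∪ B)).parts = x.parts \ {A, B} := by
  have hdisj {D E : Finset α} (hD : D ∈ x.parts) (hE : E ∈ x.parts) (hDE : D ≠ E) :
      Disjoint D E := x.disjoint hD hE hDE
  ext D
  simp only [Finpartition.mem_avoid, mem_sdiff, mem_insert, mem_singleton, not_or]
  constructor
  · rintro ⟨E, hE, hEAB, rfl⟩
    have hEA : E ≠ A := by rintro rfl; exact hEAB subset_union_left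
    have hEB : E ≠ B := by rintro rfl; exact hEAB subset_union_right
    rw [sdiff_eq_self_of_disjoint (disjoint_union_right.2 ⟨hdisj hE hA hEA, hdisj hE hB hEB⟩)]
    exact ⟨hE, hEA, hEB⟩
  · rintro ⟨hD, hDA, hDB⟩
    have hDAB : Disjoint D (A ∪ B) := disjoint_union_right.2 ⟨hdisj hD hA hDA, hdisj hD hB hDB⟩
    exact ⟨D, hD, fun h => x.ne_bot hD (hDAB.eq_bot_of_le h), sdiff_eq_self_of_disjoint hDAB⟩

lemma ssubset_union_of_ne (hA : A ∈ x.parts) (hB : B ∈ x.parts) (hAB : A ≠ B) : A ⊂ A ∪ B := by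
  refine subset_union_left.ssubset_of_ne fun h => ?_
  exact x.ne_bot hB ((x.disjoint hA hB hAB).symm.eq_bot_of_le (union_eq_left.1 h.symm))

section Recut

variable (hA : A ∈ x.parts) (hB : B ∈ x.parts)

lemma parts_recut (hS : S.Nonempty) (hSAB : S ⊂ A ∪ B) :
    (recut x hA hB hS hSAB).parts = insert ((A ∪ B) \ S) (insert S (x.parts \ {A, B})) := by
  rw [← parts_avoid_union hA hB]
  rfl

lemma recut_self (hAB : A ≠ B) :
    recut x hA hB (x.nonempty_of_mem_parts hA) (ssubset_union_of_ne hA hB hAB) = x := by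
  have hBA : (A ∪ B) \ A = B := by
    rw [union_sdiff_left]
    exact sdiff_eq_self_of_disjoint (x.disjoint hB hA hAB.symm)
  have hsub : {A, B} ⊆ x.parts := insert_subset hA (singleton_subset_iff.2 hB)
  apply Finpartition.ext
  rw [parts_recut, hBA, insert_comm, insert_eq B, insert_eq A, ← union_assoc, ← insert_eq,
    union_sdiff_of_subset hsub]

lemma blockSizes_recut (hS : S.Nonempty) (hSAB : S ⊂ A ∪ B) :
    blockSizes (recut x hA hB hS hSAB) =
      {#(A ∪ B) - #S, #S} + blockSizes (x.avoid (A ∪ B)) := by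
  rw [recut, blockSizes_extend, blockSizes_extend, card_sdiff_of_subset hSAB.subset,
    Multiset.insert_eq_cons, Multiset.cons_add, Multiset.singleton_add]

lemma card_parts_recut (hAB : A ≠ B) (hS : S.Nonempty) (hSAB : S ⊂ A ∪ B) :
    #(recut x hA hB hS hSAB).parts = #x.parts := by
  conv_rhs => rw [← recut_self hA hB hAB]
  simp only [← card_blockSizes, blockSizes_recut, Multiset.card_add, Multiset.card_pair]

lemma blockSizes_recut_eq_iff (hAB : A ≠ B) (hS : S.Nonempty) (hSAB : S ⊂ A ∪ B) :
    blockSizes (recut x hA hB hS hSAB) = blockSizes x ↔ #S = #A ∨ #S = #B := by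
  have hcard : #(A ∪ B) = #A + #B := card_union_of_disjoint (x.disjoint hA hB hAB)
  conv_lhs => rhs; rw [← recut_self hA hB hAB]
  rw [blockSizes_recut, blockSizes_recut, add_left_inj, hcard, Nat.add_sub_cancel_left]
  constructor
  · intro h
    have hmem : #S ∈ ({#B, #A} : Multiset ℕ) := h ▸ by simp
    simpa [or_comm] using hmem
  · rintro (h | h)
    · rw [h, Nat.add_sub_cancel_left]
    · rw [h, Nat.add_sub_cancel, Multiset.pair_comm]

lemma disjoint_recut_iff (hS : S.Nonempty) (hSAB : S ⊂ A ∪ B) :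
    Disjoint (recut x hA hB hS hSAB) c ↔
      Set.InjOn c.part ((A ∪ B) \ S : Finset α) ∧ Set.InjOn c.part S ∧
        ∀ D ∈ x.parts \ {A, B}, Set.InjOn c.part D := by
  simp only [disjoint_iff_injOn_part, parts_recut, forall_mem_insert]

lemma exists_disjoint_recut_card_succ (hU : U.Nonempty) (hUAB : U ⊂ A ∪ B)
    (hcard : #((A ∪ B) \ U) < #U) (hc : Disjoint (recut x hA hB hU hUAB) c) :
    ∃ (S : Finset α) (hS : S.Nonempty) (hSAB : S ⊂ A ∪ B),
      #S + 1 = #U ∧ Disjoint (recut x hA hB hS hSAB) c := by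
  obtain ⟨hinjV, hinjU, hinj⟩ := (disjoint_recut_iff hA hB hU hUAB).1 hc
  obtain ⟨e, he, hinje⟩ := exists_mem_injOn_insert hinjU hinjV hcard
  have hV : 0 < #((A ∪ B) \ U) := card_pos.2 (sdiff_nonempty.2 hUAB.not_subset)
  have hS : (U.erase e).Nonempty := (erase_nonempty he).2 (one_lt_card_iff_nontrivial.1 (by omega))
  refine ⟨U.erase e, hS, (erase_subset e U).trans_ssubset hUAB, card_erase_add_one he, ?_⟩
  rw [disjoint_recut_iff, sdiff_erase (hUAB.subset he)]
  exact ⟨hinje, hinjU.mono (erase_subset e U), hinj⟩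

end Recut

lemma exists_injOn_parts_lt {k : ℕ} (hx : ∀ B ∈ x.parts, #B ≤ k) :
    ∃ f : α → ℕ, (∀ a ∈ s, f a < k) ∧ ∀ B ∈ x.parts, Set.InjOn f B := by
  obtain ⟨e, he⟩ := x.exists_enumeration
  refine ⟨fun a => if ha : a ∈ s then (e ⟨a, ha⟩).2 else 0, fun a ha => ?_,
    fun B hB a ha b hb => ?_⟩
  · simp only [dif_pos ha]
    exact (e ⟨a, ha⟩).2.2.trans_le (hx _ (e ⟨a, ha⟩).1.2)
  · have has := x.subset hB ha
    have hbs := x.subset hB hb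
    have hpart := (he ⟨a, has⟩ ⟨b, hbs⟩).1
      ((x.part_eq_of_mem hB ha).trans (x.part_eq_of_mem hB hb).symm)
    simp only [dif_pos has, dif_pos hbs]
    intro hab
    have heab : e ⟨a, has⟩ = e ⟨b, hbs⟩ :=
      Sigma.ext hpart ((Fin.heq_ext_iff (by rw [hpart])).2 hab)
    exact congrArg Subtype.val (e.injective heab)

lemma exists_card_parts_le_card_image_disjoint {β : Type*} [DecidableEq β] {f : α → β}
    (hf : ∀ B ∈ x.parts, Set.InjOn f B) :
    ∃ c : Finpartition s, #c.parts ≤ #(s.image f) ∧ Disjoint x c := by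
  refine ⟨Finpartition.ofSetSetoid (Setoid.ker f) s, ?_, ?_⟩
  · rw [Finpartition.ofSetSetoid_parts]
    calc #(s.image fun a => {b ∈ s | f a = f b})
        = #((s.image f).image fun i => {b ∈ s | i = f b}) := by rw [image_image]; rfl
      _ ≤ #(s.image f) := card_image_le
  · refine disjoint_iff_injOn_part.2 fun B hB a ha b hb hab => hf B hB ha hb ?_
    have hbs := x.subset hB hb
    rw [← Finpartition.mem_part_iff_part_eq_part _ (x.subset hB ha) hbs,
      Finpartition.mem_part_ofSetSetoid_iff_rel] at hab
    exact hab.2.2.symm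

lemma exists_card_parts_le_disjoint {k : ℕ} (hx : ∀ B ∈ x.parts, #B ≤ k) :
    ∃ c : Finpartition s, #c.parts ≤ k ∧ Disjoint x c := by
  obtain ⟨f, hfk, hf⟩ := exists_injOn_parts_lt hx
  obtain ⟨c, hcf, hxc⟩ := exists_card_parts_le_card_image_disjoint hf
  have himage : s.image f ⊆ range k := image_subset_iff.2 fun a ha => mem_range.2 (hfk a ha)
  exact ⟨c, hcf.trans ((card_le_card himage).trans (card_range k).le), hxc⟩

lemma isBlocking_card_parts_le_iff {k : ℕ} :
    IsBlocking {c : Finpartition s | #c.parts ≤ k} x ↔ ∃ B ∈ x.parts, k < #B := by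
  constructor
  · intro hx
    by_contra! h
    obtain ⟨c, hck, hxc⟩ := exists_card_parts_le_disjoint h
    exact hx c hck hxc
  · rintro ⟨B, hB, hkB⟩ c hck hxc
    have hBc : #B ≤ #c.parts := card_le_card_of_injOn c.part
      (fun a ha => c.part_mem.2 (x.subset hB ha)) (disjoint_iff_injOn_part.1 hxc B hB)
    exact (hBc.trans hck).not_gt hkB

/-- The partition of `s` with block `A` and all other blocks singletons: the least partition having
the elements of `A` in one block. -/
def singleBlock (hA : A.Nonempty) (hAs : A ⊆ s) : Finpartition s :=
  (⊥ : Finpartition (s \ A)).extend hA.ne_empty disjoint_sdiff_self_left (sdiff_union_of_subset hAs)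

lemma mem_parts_singleBlock (hA : A.Nonempty) (hAs : A ⊆ s) :
    B ∈ (singleBlock hA hAs).parts ↔ B = A ∨ ∃ a ∈ s \ A, {a} = B := by
  rw [singleBlock, Finpartition.extend_parts, mem_insert, Finpartition.mem_bot_iff]

lemma singleBlock_le (hA : A.Nonempty) (hB : B ∈ x.parts) (hAB : A ⊆ B) :
    singleBlock hA (hAB.trans (x.subset hB)) ≤ x := by
  intro D hD
  obtain rfl | ⟨a, ha, rfl⟩ := (mem_parts_singleBlock hA _).1 hD
  · exact ⟨B, hB, hAB⟩
  · have has := (mem_sdiff.1 ha).1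
    exact ⟨x.part a, x.part_mem.2 has, singleton_subset_iff.2 (x.mem_part has)⟩

end Finpartition

section Shape

variable {n : ℕ} {lam : Nat.Partition n} {x y : SetPart n} {A B : Finset (Fin n)}

lemma shape_eq_shape_iff : shape x = shape y ↔ blockSizes x = blockSizes y :=
  Nat.Partition.ext_iff

lemma card_parts_eq_of_shape_eq (h : shape x = shape y) : #x.parts = #y.parts := by
  rw [← card_blockSizes, shape_eq_shape_iff.1 h, card_blockSizes]

lemma eq_of_le_of_shape_eq (hxy : x ≤ y) (h : shape x = shape y) : x = y :=
  eq_of_le_of_card_parts_le hxy (card_parts_eq_of_shape_eq h).le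

lemma isAntichain_fi_singleton : IsAntichain (· ≤ ·) (fi {lam}) :=
  fun _ hx _ hy hne hxy => hne (eq_of_le_of_shape_eq hxy (Eq.trans hx (Eq.symm hy)))

lemma shape_eq_hook (hA : A ∈ x.parts) (h : ∀ B ∈ x.parts, B ≠ A → #B = 1) :
    shape x = hook n #A (card_pos.2 (x.nonempty_of_mem_parts hA)) (card_finset_fin_le A) := by
  have hones : (x.parts.erase A).val.map card = Multiset.replicate #(x.parts.erase A) 1 := by
    refine Multiset.eq_replicate.2 ⟨Multiset.card_map _ _, ?_⟩
    intro k hk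
    obtain ⟨B, hB, rfl⟩ := Multiset.mem_map.1 hk
    exact h B (mem_of_mem_erase hB) (ne_of_mem_erase hB)
  have hparts : (shape x).parts = #A ::ₘ Multiset.replicate #(x.parts.erase A) 1 :=
    (blockSizes_eq_cons hA).trans (congrArg _ hones)
  have hsum : #A + #(x.parts.erase A) = n := by
    simpa [hparts] using (shape x).parts_sum
  refine Nat.Partition.ext (hparts.trans ?_)
  rw [Nat.eq_sub_of_add_eq' hsum]
  rfl

lemma mem_upperClosure_fi_hook {p : ℕ} (hp : 0 < p) (hpn : p ≤ n) :
    x ∈ upperClosure (fi {hook n p hp hpn}) ↔ ∃ B ∈ x.parts, p ≤ #B := by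
  rw [mem_upperClosure]
  constructor
  · rintro ⟨y, hy, hyx⟩
    have hpy : p ∈ blockSizes y := by
      have hparts : blockSizes y = p ::ₘ Multiset.replicate (n - p) 1 :=
        congrArg Nat.Partition.parts hy
      exact hparts ▸ Multiset.mem_cons_self p _
    obtain ⟨B, hB, rfl⟩ := mem_blockSizes.1 hpy
    obtain ⟨D, hD, hBD⟩ := hyx hB
    exact ⟨D, hD, card_le_card hBD⟩
  · rintro ⟨B, hB, hpB⟩
    obtain ⟨A, hAB, rfl⟩ := exists_subset_card_eq hpB
    have hA : A.Nonempty := card_pos.1 hp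
    refine ⟨_, shape_eq_hook ((mem_parts_singleBlock hA _).2 (Or.inl rfl)) fun D hD hDA => ?_,
      singleBlock_le hA hB hAB⟩
    obtain ⟨a, -, rfl⟩ := ((mem_parts_singleBlock hA _).1 hD).resolve_left hDA
    exact card_singleton a

lemma exists_blocker_eq_fi_hook {p : ℕ} (hp : 1 < p) (hpn : p ≤ n) :
    ∃ C : Set (SetPart n), IsAnti C ∧ blocker C = fi {hook n p (Nat.zero_lt_of_lt hp) hpn} := by
  refine exists_isAnti_blocker_eq (S := {c | #c.parts ≤ p - 1}) ⟨⊤, ?_⟩ (fun h => ?_)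
    isAntichain_fi_singleton fun x => ?_
  · have htop : #(⊤ : SetPart n).parts ≤ 1 :=
      card_le_one.2 fun _ ha _ hb => Finpartition.parts_top_subsingleton _ ha hb
    exact htop.trans (by omega)
  · have hbot : #(⊥ : SetPart n).parts = n := by
      rw [Finpartition.card_bot, card_univ, Fintype.card_fin]
    have hle : #(⊥ : SetPart n).parts ≤ p - 1 := h
    omega
  · rw [isBlocking_card_parts_le_iff, mem_upperClosure_fi_hook]
    exact exists_congr fun B => and_congr_right fun _ => by omega

lemma eq_of_blocker_eq_fi_of_one_lt_card {C : Set (SetPart n)} (hC : blocker C = fi {lam})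
    (hx : shape x = lam) (hA : A ∈ x.parts) (hB : B ∈ x.parts) (hA1 : 1 < #A) (hB1 : 1 < #B) :
    A = B := by
  by_contra hAB
  wlog hBA : #B ≤ #A generalizing A B
  · exact this hB hA hB1 hA1 (Ne.symm hAB) (by omega)
  have hblock {y : SetPart n} : IsBlocking C y ↔ y ∈ upperClosure (fi {lam}) := by
    rw [← hC, mem_upperClosure_blocker_iff]
  have hcard : #(A ∪ B) = #A + #B := card_union_of_disjoint (x.disjoint hA hB hAB)
  obtain ⟨U, hAU, hUAB, hUA⟩ : ∃ U, A ⊆ U ∧ U ⊆ A ∪ B ∧ #U = #A + 1 :=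
    exists_subsuperset_card_eq subset_union_left (by omega) (by omega)
  have hU : U.Nonempty := card_pos.1 (by omega)
  have hUss : U ⊂ A ∪ B := hUAB.ssubset_of_ne (by rintro rfl; omega)
  have hyblock : IsBlocking C (recut x hA hB hU hUss) := by
    intro c hc hyc
    obtain ⟨S, hS, hSAB, hSU, hzc⟩ := exists_disjoint_recut_card_succ hA hB hU hUss
      (by rw [card_sdiff_of_subset hUAB]; omega) hyc
    have hz : shape (recut x hA hB hS hSAB) = shape x :=
      shape_eq_shape_iff.2 ((blockSizes_recut_eq_iff hA hB hAB hS hSAB).2 (by omega))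
    exact hblock.2 (subset_upperClosure (hz.trans hx)) c hc hzc
  obtain ⟨w, hw, hwy⟩ := mem_upperClosure.1 (hblock.1 hyblock)
  have hwx : shape w = shape x := Eq.trans hw hx.symm
  have hwy' : w = recut x hA hB hU hUss := eq_of_le_of_card_parts_le hwy
    ((card_parts_eq_of_shape_eq hwx).trans (card_parts_recut hA hB hAB hU hUss).symm).le
  have hUcard : #U = #A ∨ #U = #B :=
    (blockSizes_recut_eq_iff hA hB hAB hU hUss).1 (hwy' ▸ shape_eq_shape_iff.1 hwx)
  omega

lemma exists_eq_hook_of_blocker_eq_fi {C : Set (SetPart n)} (hC : IsAnti C)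
    (hCl : blocker C = fi {lam}) :
    ∃ (p : ℕ) (hp : 1 < p) (hpn : p ≤ n), lam = hook n p (Nat.zero_lt_of_lt hp) hpn := by
  obtain ⟨x, hx⟩ := blocker_nonempty hC.2.1
  have hshape : shape x = lam := hCl.subset hx
  have hbot : x ≠ ⊥ := (mem_blocker_iff_minimal.1 hx).prop.ne_bot hC.1
  obtain ⟨A, hA, hA1⟩ : ∃ A ∈ x.parts, 1 < #A := by
    simpa only [ne_eq, eq_bot_iff_card_parts_le_one, not_forall, not_le, exists_prop] using hbot
  refine ⟨#A, hA1, card_finset_fin_le A, hshape.symm.trans (shape_eq_hook hA fun B hB hBA => ?_)⟩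
  have hB0 : 0 < #B := card_pos.2 (x.nonempty_of_mem_parts hB)
  by_contra hB1
  exact hBA (eq_of_blocker_eq_fi_of_one_lt_card hCl hshape hB hA (by omega) hA1)

end Shape

/-- Corollary 3.3 (second part): for a partition `λ` of `n`, the antichain `fi(λ)`
of all set partitions of shape `λ` is itself a blocker in `Π_n` (i.e. equals `C*`
for some antichain `C`) if and only if `λ` is a hook shape `(p, 1^{n-p})`. -/
theorem fi_isBlocker_iff_hook (n : ℕ) (lam : Nat.Partition n) :
    (∃ C : Set (SetPart n), IsAnti C ∧ blocker C = fi {lam}) ↔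
      ∃ (p : ℕ) (hp : 2 ≤ p) (hpn : p ≤ n), lam = hook n p (by omega) hpn := by
  constructor
  · rintro ⟨C, hC, hCl⟩
    exact exists_eq_hook_of_blocker_eq_fi hC hCl
  · rintro ⟨p, hp, hpn, rfl⟩
    exact exists_blocker_eq_fi_hook hp hpn
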